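/- Let p be an odd prime and (V, Q) a nondegenerate quadratic space over ℚ_p of dimension n ≥ 3 containing no self-dual lattice. If Λ₁ and Λ₂ are two vertex lattices of type 2 in V (i.e. pΛᵢ ⊆ Λᵢ^∨ ⊆ Λᵢ with dim_{𝔽_p}(Λᵢ/Λᵢ^∨) = 2), then there exists a ℚ_p-linear isometry g of (V, Q) with det(g) = 1 such that g(Λ₁) = Λ₂; that is, SO(V)(ℚ_p) acts transitively on the set of vertex lattices of type 2 in V. -/

import Mathlib

/-!
Statement 3: Let `p` be an odd prime and `(V, Q)` a nondegenerate quadratic space over `ℚ_p` of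
dimension `n ≥ 3` containing no self-dual lattice.  Then `SO(V)(ℚ_p)` acts transitively on the
set of vertex lattices of type 2 in `V`.
-/

open QuadraticMap

variable (p : ℕ) [Fact p.Prime]
variable {V : Type*} [AddCommGroup V] [Module ℚ_[p] V] [Module ℤ_[p] V]
  [IsScalarTower ℤ_[p] ℚ_[p] V]

/-- `L` is a `ℤ_p`-lattice in the `ℚ_p`-vector space `V`:
a finitely generated `ℤ_p`-submodule spanning `V` over `ℚ_p`. -/
def IsLattice (L : Submodule ℤ_[p] V) : Prop :=
  L.FG ∧ Submodule.span ℚ_[p] (L : Set V) = ⊤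

/-- The dual lattice `L^∨ = {x ∈ V : [x, y] ∈ ℤ_p for all y ∈ L}` with respect to the
bilinear form `[x, y] = Q (x + y) - Q x - Q y` associated to `Q`. -/
noncomputable def dualLattice (Q : QuadraticForm ℚ_[p] V) (L : Submodule ℤ_[p] V) :
    Submodule ℤ_[p] V :=
  LinearMap.BilinForm.dualSubmodule (QuadraticMap.polarBilin Q) L

/-- There is a saturated chain (each step a covering in the lattice of `ℤ_p`-submodules) of
length `k` from `A` to `B`.  For `A ≤ B` this says exactly that the module `B/A` has length `k`
over `ℤ_p`; when `B/A` is killed by `p` this is the statement `dim_{𝔽_p} (B/A) = k`. -/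
def chainLength (A B : Submodule ℤ_[p] V) (k : ℕ) : Prop :=
  ∃ f : Fin (k + 1) → Submodule ℤ_[p] V,
    f 0 = A ∧ f (Fin.last k) = B ∧ ∀ i : Fin k, f i.castSucc ⋖ f i.succ

/-- `Λ` is a vertex lattice of type 2: a lattice with `pΛ ⊆ Λ^∨ ⊆ Λ` and
`dim_{𝔽_p} (Λ/Λ^∨) = 2`. -/
noncomputable def IsTypeTwoVertexLattice (Q : QuadraticForm ℚ_[p] V)
    (Λ : Submodule ℤ_[p] V) : Prop :=
  IsLattice p Λ ∧ (∀ x ∈ Λ, (p : ℤ_[p]) • x ∈ dualLattice p Q Λ) ∧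
    dualLattice p Q Λ ≤ Λ ∧ chainLength p (dualLattice p Q Λ) Λ 2

/-!
Over `ℤ_p` with `p` odd every integral quadratic module has an orthogonal basis. For a vertex
lattice `Λ` of type 2 the values of `Q` on such a basis are units, except for two of norm `p`.
Let `d` be the product of these two values. If `-d` were a square, the plane spanned by the two
vectors would be hyperbolic, and exchanging its lattice for a unimodular one would give a self-dual
lattice in `V`. Hence `-d` is a nonsquare of even valuation, which determines `d` up to squares. The
product of all the values is the discriminant of `V`, so the product of the unit values is
determined up to squares as well. Over `ℤ_p` a diagonal form whose coefficients all have the same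
valuation depends only on its rank and discriminant, so two vertex lattices of type 2 have
orthogonal bases on which `Q` takes the same values. Mapping one basis to the other is an isometry,
and changing the sign of one basis vector makes its determinant equal to `1`.
-/

section PadicSquares

variable {p : ℕ} [Fact p.Prime]

lemma norm_two_padic (hp : p ≠ 2) : ‖(2 : ℚ_[p])‖ = 1 := by
  have h := Padic.norm_natCast_eq_one_iff.2 ((Nat.coprime_primes Fact.out Nat.prime_two).2 hp)
  exact_mod_cast h

lemma isUnit_two_padicInt (hp : p ≠ 2) : IsUnit (2 : ℤ_[p]) :=
  PadicInt.isUnit_iff.2 (norm_two_padic hp)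

lemma isSquare_of_isSquare_toZMod (hp : p ≠ 2) {u : ℤ_[p]} (hu : IsUnit u)
    (h : IsSquare (PadicInt.toZMod u)) : IsSquare u := by
  obtain ⟨r, hr⟩ := h
  obtain ⟨a, rfl⟩ := ZMod.ringHom_surjective (PadicInt.toZMod (p := p)) r
  have ha : ‖a‖ = 1 := by
    rw [← PadicInt.isUnit_iff, ← isUnit_map_iff PadicInt.toZMod, ← isUnit_mul_self_iff, ← hr]
    exact hu.map _
  have happrox : ‖a ^ 2 - u‖ < 1 := by
    rw [← PadicInt.not_isUnit_iff, ← isUnit_map_iff PadicInt.toZMod]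
    simp [hr, pow_two]
  obtain ⟨z, hz, -⟩ := hensels_lemma (F := Polynomial.X ^ 2 - Polynomial.C u) (a := a) (by
    simpa [ha, one_add_one_eq_two, PadicInt.isUnit_iff.1 (isUnit_two_padicInt hp)] using happrox)
  exact ⟨z, by simpa [sub_eq_zero, pow_two, eq_comm] using hz⟩

lemma isSquare_mul_of_not_isSquare_padicInt (hp : p ≠ 2) {u v : ℤ_[p]} (hu : IsUnit u)
    (hv : IsUnit v) (hu' : ¬ IsSquare u) (hv' : ¬ IsSquare v) : IsSquare (u * v) := by
  apply isSquare_of_isSquare_toZMod hp (hu.mul hv)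
  have hu'' := mt (isSquare_of_isSquare_toZMod hp hu) hu'
  have hv'' := mt (isSquare_of_isSquare_toZMod hp hv) hv'
  rw [map_mul, ← quadraticChar_one_iff_isSquare
      (mul_ne_zero (hu.map PadicInt.toZMod).ne_zero (hv.map PadicInt.toZMod).ne_zero),
    map_mul, quadraticChar_neg_one_iff_not_isSquare.2 hu'',
    quadraticChar_neg_one_iff_not_isSquare.2 hv'']
  norm_num

lemma isSquare_div_of_not_isSquare_of_norm_eq_sq (hp : p ≠ 2) {u v t : ℚ_[p]} (ht : t ≠ 0)
    (hu : ‖u‖ = ‖t‖ ^ 2) (hv : ‖v‖ = ‖t‖ ^ 2) (hu' : ¬ IsSquare u) (hv' : ¬ IsSquare v) :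
    IsSquare (u / v) := by
  have exists_unit {w : ℚ_[p]} (hw : ‖w‖ = ‖t‖ ^ 2) (hw' : ¬ IsSquare w) :
      ∃ W : ℤ_[p], IsUnit W ∧ ¬ IsSquare W ∧ w = W * t ^ 2 := by
    have hnorm : ‖w / t ^ 2‖ = 1 := by
      rw [norm_div, norm_pow, hw, div_self (pow_ne_zero 2 (norm_ne_zero_iff.2 ht))]
    have hw_eq : w = w / t ^ 2 * t ^ 2 := (div_mul_cancel₀ w (pow_ne_zero 2 ht)).symm
    refine ⟨⟨w / t ^ 2, hnorm.le⟩, PadicInt.isUnit_iff.2 hnorm, fun hsq ↦ hw' ?_, hw_eq⟩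
    rw [hw_eq]
    exact (hsq.map PadicInt.Coe.ringHom).mul (IsSquare.sq t)
  obtain ⟨U, hU, hU', rfl⟩ := exists_unit hu hu'
  obtain ⟨W, hW, hW', rfl⟩ := exists_unit hv hv'
  have hW0 : (W : ℚ_[p]) ≠ 0 := by simpa using hW.ne_zero
  have hUW : IsSquare ((U : ℚ_[p]) * W) := by
    exact_mod_cast (isSquare_mul_of_not_isSquare_padicInt hp hU hW hU' hW').map
      PadicInt.Coe.ringHom
  have hdiv : (U * t ^ 2 : ℚ_[p]) / (W * t ^ 2) = U * W / W ^ 2 := by field_simp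
  exact hdiv ▸ hUW.div (IsSquare.sq _)

lemma exists_mul_sq_add_mul_sq_eq_one_zmod (hp : p ≠ 2) {a b : ZMod p} (ha : a ≠ 0)
    (hb : b ≠ 0) : ∃ x y : ZMod p, a * x ^ 2 + b * y ^ 2 = 1 := by
  have hdeg : (Polynomial.C b * Polynomial.X ^ 2 - Polynomial.C 1).degree = 2 := by
    rw [Polynomial.degree_sub_C] <;> rw [Polynomial.degree_C_mul_X_pow 2 hb] <;> norm_num
  obtain ⟨x, y, h⟩ := FiniteField.exists_root_sum_quadratic
    (Polynomial.degree_C_mul_X_pow 2 ha) hdeg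
    (by simpa using (Fact.out : p.Prime).eq_two_or_odd.resolve_left hp)
  refine ⟨x, y, ?_⟩
  simp only [Polynomial.eval_mul, Polynomial.eval_C, Polynomial.eval_pow, Polynomial.eval_X,
    Polynomial.eval_sub] at h
  linear_combination h

lemma exists_mul_sq_add_mul_sq_eq_one_padicInt (hp : p ≠ 2) {a b : ℤ_[p]} (ha : IsUnit a)
    (hb : IsUnit b) : ∃ x y : ℤ_[p], a * x ^ 2 + b * y ^ 2 = 1 := by
  have lift_left {a b x y : ℤ_[p]} (ha : IsUnit a) (hx : PadicInt.toZMod x ≠ 0)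
      (h : PadicInt.toZMod a * PadicInt.toZMod x ^ 2
        + PadicInt.toZMod b * PadicInt.toZMod y ^ 2 = 1) :
      ∃ z, a * z ^ 2 + b * y ^ 2 = 1 := by
    obtain ⟨a', haa'⟩ := ha.exists_right_inv
    have hres : PadicInt.toZMod (a' * (1 - b * y ^ 2)) = PadicInt.toZMod x ^ 2 := by
      have haa'' : PadicInt.toZMod a * PadicInt.toZMod a' = 1 := by rw [← map_mul, haa', map_one]
      simp only [map_mul, map_sub, map_one, map_pow]
      linear_combination -PadicInt.toZMod a' * h + PadicInt.toZMod x ^ 2 * haa''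
    have hunit : IsUnit (a' * (1 - b * y ^ 2)) := by
      rw [← isUnit_map_iff PadicInt.toZMod, hres]
      exact (pow_ne_zero 2 hx).isUnit
    obtain ⟨z, hz⟩ := isSquare_of_isSquare_toZMod hp hunit (hres ▸ IsSquare.sq _)
    exact ⟨z, by linear_combination (1 - b * y ^ 2) * haa' - a * hz⟩
  obtain ⟨r, s, hrs⟩ := exists_mul_sq_add_mul_sq_eq_one_zmod hp
    (ha.map PadicInt.toZMod).ne_zero (hb.map PadicInt.toZMod).ne_zero
  obtain ⟨x, rfl⟩ := ZMod.ringHom_surjective (PadicInt.toZMod (p := p)) r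
  obtain ⟨y, rfl⟩ := ZMod.ringHom_surjective (PadicInt.toZMod (p := p)) s
  by_cases hx : PadicInt.toZMod x = 0
  · have hy : PadicInt.toZMod y ≠ 0 := by
      intro hy
      simp [hx, hy] at hrs
    obtain ⟨z, hz⟩ := lift_left (b := a) (y := x) hb hy (by rw [add_comm, hrs])
    exact ⟨x, z, by rw [add_comm, hz]⟩
  · obtain ⟨z, hz⟩ := lift_left ha hx hrs
    exact ⟨z, y, hz⟩

end PadicSquares

section DiagonalBasis

lemma range_eq_pair_union_image {α β : Type*} (f : α → β) (i j : α) :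
    Set.range f = {f i, f j} ∪ f '' {i, j}ᶜ := by
  rw [← Set.image_pair, ← Set.image_union, Set.union_compl_self, Set.image_univ]

variable {R K E ι : Type*} [CommRing R] [Field K] [AddCommGroup E] [Module R E]
  [Module K E]

/-- A family `b` generates the `R`-submodule `L` and diagonalizes `Q`, with nonzero diagonal
coefficients `c i = Q (b i)`. The submodule `L` need not span the whole space. -/
structure IsDiagonalBasis (Q : QuadraticForm K E) (L : Submodule R E) (c : ι → K) (b : ι → E) :
    Prop where
  polar_eq_zero : Pairwise fun i j ↦ polar Q (b i) (b j) = 0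
  map_eq : ∀ i, Q (b i) = c i
  ne_zero : ∀ i, c i ≠ 0
  span_eq : Submodule.span R (Set.range b) = L

/-- The restriction of `Q` to `L` is isometric to the diagonal form `∑ i, c i * x i ^ 2`. -/
def HasDiagonalForm (Q : QuadraticForm K E) (L : Submodule R E) (c : ι → K) : Prop :=
  ∃ b : ι → E, IsDiagonalBasis Q L c b

variable {Q : QuadraticForm K E} {L L' : Submodule R E} {c c' : ι → K} {b b' : ι → E}

lemma HasDiagonalForm.ne_zero (h : HasDiagonalForm Q L c) (i : ι) : c i ≠ 0 :=
  h.elim fun _ hb ↦ hb.ne_zero i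

lemma HasDiagonalForm.reindex {κ : Type*} (h : HasDiagonalForm Q L c) (e : κ ≃ ι) :
    HasDiagonalForm Q L (c ∘ e) := by
  obtain ⟨b, hb⟩ := h
  exact ⟨b ∘ e, fun i j hij ↦ hb.polar_eq_zero (e.injective.ne hij), fun i ↦ hb.map_eq (e i),
    fun i ↦ hb.ne_zero (e i), by rw [e.surjective.range_comp, hb.span_eq]⟩

lemma IsDiagonalBasis.cons {k : ℕ} {c : Fin k → K} {b : Fin k → E} (hb : IsDiagonalBasis Q L c b)
    {x : E} (hx : Q x ≠ 0) (horth : ∀ y ∈ L, polar Q x y = 0) :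
    IsDiagonalBasis Q (Submodule.span R {x} ⊔ L) (Fin.cons (Q x) c : Fin (k + 1) → K)
      (Fin.cons x b) where
  polar_eq_zero := by
    have hxb (i : Fin k) : polar Q x (b i) = 0 :=
      horth _ (hb.span_eq ▸ Submodule.subset_span (Set.mem_range_self i))
    have hbx (i : Fin k) : polar Q (b i) x = 0 := polar_comm Q _ _ ▸ hxb i
    intro i j hij
    cases i using Fin.cases <;> cases j using Fin.cases
    · exact absurd rfl hij
    · exact hxb _
    · exact hbx _
    · exact hb.polar_eq_zero (ne_of_apply_ne Fin.succ hij)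
  map_eq := Fin.cases rfl hb.map_eq
  ne_zero := Fin.cases hx hb.ne_zero
  span_eq := by rw [Fin.range_cons, Submodule.span_insert, hb.span_eq]

lemma IsDiagonalBasis.linearIndependent [NeZero (2 : K)] (hb : IsDiagonalBasis Q L c b) :
    LinearIndependent K b := by
  refine LinearMap.linearIndependent_of_isOrthoᵢ (B := polarBilin Q)
    (LinearMap.isOrthoᵢ_def.2 fun i j hij ↦ hb.polar_eq_zero hij) fun i hi ↦ ?_
  have : 2 * c i = 0 := by simpa [hb.map_eq] using hi
  exact mul_ne_zero two_ne_zero (hb.ne_zero i) this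

section Discriminant

variable [Fintype ι] [DecidableEq ι]

lemma toMatrix_polarBilin_eq_diagonal {B : Module.Basis ι K E} (hB : IsDiagonalBasis Q L c B) :
    LinearMap.BilinForm.toMatrix B (polarBilin Q) = Matrix.diagonal (fun i ↦ 2 * c i) := by
  ext i j
  rcases eq_or_ne i j with rfl | hij
  · simp [LinearMap.BilinForm.toMatrix_apply, hB.map_eq]
  · simp [LinearMap.BilinForm.toMatrix_apply, hij, hB.polar_eq_zero hij]

lemma prod_eq_det_sq_mul_prod [NeZero (2 : K)] {B B' : Module.Basis ι K E}
    (hB : IsDiagonalBasis Q L c B) (hB' : IsDiagonalBasis Q L' c' B') :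
    ∏ i, c' i = B.det B' ^ 2 * ∏ i, c i := by
  have h := congr_arg Matrix.det
    (LinearMap.BilinForm.toMatrix_mul_basis_toMatrix B B' (polarBilin Q))
  rw [Matrix.det_mul, Matrix.det_mul, Matrix.det_transpose, toMatrix_polarBilin_eq_diagonal hB,
    toMatrix_polarBilin_eq_diagonal hB', Matrix.det_diagonal, Matrix.det_diagonal,
    Finset.prod_mul_distrib, Finset.prod_mul_distrib, ← Module.Basis.det_apply] at h
  have hpow : ∏ _i : ι, (2 : K) ≠ 0 := Finset.prod_ne_zero_iff.2 fun _ _ ↦ two_ne_zero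
  exact mul_left_cancel₀ hpow (by linear_combination -h)

end Discriminant

lemma IsDiagonalBasis.map_equiv [NeZero (2 : K)] {B B' : Module.Basis ι K E}
    (hB : IsDiagonalBasis Q L c B) (hB' : IsDiagonalBasis Q L' c B') (x : E) :
    Q (B.equiv B' (Equiv.refl ι) x) = Q x := by
  let g := B.equiv B' (Equiv.refl ι)
  have hpolar : (polarBilin Q).compl₁₂ g.toLinearMap g.toLinearMap = polarBilin Q := by
    refine B.ext fun i ↦ B.ext fun j ↦ ?_
    rcases eq_or_ne i j with rfl | hij
    · simp [g, hB.map_eq, hB'.map_eq]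
    · simp [g, hB.polar_eq_zero hij, hB'.polar_eq_zero hij]
  have h : 2 * Q (g x) = 2 * Q x := by simpa using LinearMap.congr_fun₂ hpolar x x
  exact mul_left_cancel₀ two_ne_zero h

lemma IsDiagonalBasis.polar_basis {B : Module.Basis ι K E} (hB : IsDiagonalBasis Q L c B) (x : E)
    (i : ι) : polar Q x (B i) = 2 * c i * B.repr x i := by
  have hflip : (polarBilin Q).flip (B i) = (2 * c i) • B.coord i := by
    refine B.ext fun j ↦ ?_
    rcases eq_or_ne j i with rfl | hji
    · simp [hB.map_eq]
    · simp [hB.polar_eq_zero hji, hji]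
  exact LinearMap.congr_fun hflip x

section Tower

variable [Algebra R K] [IsScalarTower R K E]

lemma HasDiagonalForm.span (h : HasDiagonalForm Q L c) :
    HasDiagonalForm Q (Submodule.span K (L : Set E)) c := by
  obtain ⟨b, hb⟩ := h
  exact ⟨b, hb.polar_eq_zero, hb.map_eq, hb.ne_zero, by
    rw [← hb.span_eq, Submodule.span_span_of_tower]⟩

lemma IsDiagonalBasis.exists_basis [NeZero (2 : K)] (hb : IsDiagonalBasis Q L c b)
    (hL : Submodule.span K (L : Set E) = ⊤) : ∃ B : Module.Basis ι K E, ⇑B = b :=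
  ⟨.mk hb.linearIndependent (by rw [← hL, ← hb.span_eq, Submodule.span_span_of_tower]),
    Module.Basis.coe_mk _ _⟩

lemma HasDiagonalForm.exists_basis [NeZero (2 : K)] (h : HasDiagonalForm Q L c)
    (hL : Submodule.span K (L : Set E) = ⊤) :
    ∃ B : Module.Basis ι K E, IsDiagonalBasis Q L c B := by
  obtain ⟨b, hb⟩ := h
  obtain ⟨B, rfl⟩ := hb.exists_basis hL
  exact ⟨B, hb⟩

lemma IsDiagonalBasis.units_smul (hb : IsDiagonalBasis Q L c b) (w : ι → Rˣ) :
    IsDiagonalBasis Q L (fun i ↦ algebraMap R K (w i) ^ 2 * c i) fun i ↦ (w i : R) • b i where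
  polar_eq_zero i j hij := by
    simp only [polar_smul_left_of_tower, polar_smul_right_of_tower, hb.polar_eq_zero hij, smul_zero]
  map_eq i := by
    rw [map_smul_of_tower, hb.map_eq, Algebra.smul_def, map_mul, pow_two]
  ne_zero i := mul_ne_zero (pow_ne_zero 2 ((w i).isUnit.map _).ne_zero) (hb.ne_zero i)
  span_eq := by
    rw [← hb.span_eq]
    apply le_antisymm <;> rw [Submodule.span_le] <;> rintro _ ⟨i, rfl⟩
    · exact Submodule.smul_mem _ _ (Submodule.subset_span ⟨i, rfl⟩)
    · rw [← inv_smul_smul (w i) (b i)]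
      exact Submodule.smul_mem _ _ (Submodule.subset_span ⟨i, rfl⟩)

lemma HasDiagonalForm.units_smul (h : HasDiagonalForm Q L c) (w : ι → Rˣ) :
    HasDiagonalForm Q L fun i ↦ algebraMap R K (w i) ^ 2 * c i :=
  h.elim fun _ hb ↦ ⟨_, hb.units_smul w⟩

lemma HasDiagonalForm.update_sq_mul [DecidableEq ι] (h : HasDiagonalForm Q L c) (i : ι) (w : Rˣ) :
    HasDiagonalForm Q L (Function.update c i (algebraMap R K w ^ 2 * c i)) := by
  convert h.units_smul (Function.update 1 i w) using 1
  ext k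
  rcases eq_or_ne k i with rfl | hk <;> simp [*]

lemma HasDiagonalForm.exists_fg_submodule [Finite ι] {M : Submodule K E}
    (h : HasDiagonalForm Q M c) :
    ∃ L : Submodule R E, L.FG ∧ Submodule.span K (L : Set E) = M ∧ HasDiagonalForm Q L c := by
  obtain ⟨b, hb⟩ := h
  exact ⟨Submodule.span R (Set.range b), Submodule.fg_span (Set.finite_range b),
    by rw [Submodule.span_span_of_tower, hb.span_eq],
    b, hb.polar_eq_zero, hb.map_eq, hb.ne_zero, rfl⟩

lemma isSquare_prod_div_prod [NeZero (2 : K)] [Fintype ι] (h : HasDiagonalForm Q L c)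
    (h' : HasDiagonalForm Q L' c') (hL : Submodule.span K (L : Set E) = ⊤)
    (hL' : Submodule.span K (L' : Set E) = ⊤) : IsSquare ((∏ i, c' i) / ∏ i, c i) := by
  classical
  obtain ⟨B, hB⟩ := h.exists_basis hL
  obtain ⟨B', hB'⟩ := h'.exists_basis hL'
  rw [prod_eq_det_sq_mul_prod hB hB',
    mul_div_cancel_right₀ _ (Finset.prod_ne_zero_iff.2 fun i _ ↦ h.ne_zero i)]
  exact IsSquare.sq _

section Isometry

variable [NeZero (2 : K)]

lemma IsDiagonalBasis.exists_det_eq_one [Fintype ι] [DecidableEq ι] [Nonempty ι]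
    {B B' : Module.Basis ι K E} (hB : IsDiagonalBasis Q L c B) (hB' : IsDiagonalBasis Q L' c B') :
    ∃ b' : ι → E, IsDiagonalBasis Q L' c b' ∧ B.det b' = 1 := by
  have hprod : ∏ i, c i ≠ 0 := Finset.prod_ne_zero_iff.2 fun i _ ↦ hB.ne_zero i
  have hsq : B.det B' ^ 2 = 1 := by
    simpa [hprod] using prod_eq_det_sq_mul_prod hB hB'
  rcases sq_eq_one_iff.1 hsq with hdet | hdet
  · exact ⟨B', hB', hdet⟩
  · let i₀ : ι := Classical.arbitrary ι
    let w : ι → Rˣ := Function.update 1 i₀ (-1)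
    have hw (i : ι) : algebraMap R K (w i) ^ 2 = 1 := by
      rcases eq_or_ne i i₀ with rfl | hi <;> simp [w, *]
    have hwprod : ∏ i, algebraMap R K (w i) = -1 := by
      rw [← map_prod, ← Units.coe_prod, Finset.prod_update_of_mem (Finset.mem_univ _)]
      simp
    refine ⟨fun i ↦ (w i : R) • B' i, by simpa only [hw, one_mul] using hB'.units_smul w, ?_⟩
    have hsmul : (fun i ↦ (w i : R) • B' i) = fun i ↦ algebraMap R K (w i) • B' i :=
      funext fun i ↦ (algebraMap_smul K _ _).symm
    rw [hsmul, AlternatingMap.map_smul_univ, hwprod, hdet, smul_eq_mul, neg_one_mul, neg_neg]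

lemma exists_isometry_of_hasDiagonalForm [Finite ι] [Nonempty ι] (h : HasDiagonalForm Q L c)
    (h' : HasDiagonalForm Q L' c) (hL : Submodule.span K (L : Set E) = ⊤)
    (hL' : Submodule.span K (L' : Set E) = ⊤) :
    ∃ g : E ≃ₗ[K] E, (∀ x, Q (g x) = Q x) ∧ LinearMap.det (g : E →ₗ[K] E) = 1 ∧
      ⇑g '' (L : Set E) = (L' : Set E) := by
  classical
  have := Fintype.ofFinite ι
  obtain ⟨B, hB⟩ := h.exists_basis hL
  obtain ⟨B₀, hB₀⟩ := h'.exists_basis hL'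
  obtain ⟨b', hb', hdet⟩ := hB.exists_det_eq_one hB₀
  obtain ⟨B', rfl⟩ := hb'.exists_basis hL'
  let g := B.equiv B' (Equiv.refl ι)
  have hgB : g ∘ B = B' := by ext i; simp [g]
  refine ⟨g, hB.map_equiv hb', ?_, ?_⟩
  · have h := B.det_comp g.toLinearMap B
    rw [LinearEquiv.coe_coe, hgB, hdet, B.det_self, mul_one] at h
    exact h.symm
  · have hmap : L.map (g.toLinearMap.restrictScalars R) = L' := by
      rw [← hB.span_eq, ← hb'.span_eq, Submodule.map_span, ← Set.range_comp, ← hgB]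
      rfl
    rw [← hmap]
    rfl

end Isometry

section UpdatePair

variable [DecidableEq ι] {i j : ι}

lemma span_range_update_update (b : ι → E) {u v : E} (hij : i ≠ j)
    (hspan : Submodule.span R {u, v} = Submodule.span R {b i, b j}) :
    Submodule.span R (Set.range (Function.update (Function.update b i u) j v)) =
      Submodule.span R (Set.range b) := by
  have himage : Function.update (Function.update b i u) j v '' {i, j}ᶜ = b '' {i, j}ᶜ :=
    Set.image_congr fun k hk ↦ by
      simp only [Set.mem_compl_iff, Set.mem_insert_iff, Set.mem_singleton_iff, not_or] at hk
      simp [hk]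
  rw [range_eq_pair_union_image _ i j, himage, range_eq_pair_union_image b i j]
  simp [Submodule.span_union, hspan, hij]

lemma map_smul_add_smul_of_polar_eq_zero {u v : E} (huv : polar Q u v = 0) (r s : R) :
    Q (r • u + s • v) = algebraMap R K r ^ 2 * Q u + algebraMap R K s ^ 2 * Q v := by
  rw [QuadraticMap.map_add Q]
  simp only [map_smul_of_tower, polar_smul_left_of_tower, polar_smul_right_of_tower, huv,
    Algebra.smul_def, map_mul]
  ring

lemma polar_eq_zero_of_mem_span_pair {x y z w : E} (hy : polar Q x y = 0) (hz : polar Q x z = 0)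
    (hw : w ∈ Submodule.span R {y, z}) : polar Q x w = 0 := by
  obtain ⟨r, s, rfl⟩ := Submodule.mem_span_pair.1 hw
  simp only [polar_add_right, polar_smul_right_of_tower, hy, hz, smul_zero, add_zero]

lemma IsDiagonalBasis.update_pair (hb : IsDiagonalBasis Q L c b) (hij : i ≠ j) {u v : E}
    (huv : polar Q u v = 0) (hu : Q u ≠ 0) (hv : Q v ≠ 0)
    (hspan : Submodule.span R {u, v} = Submodule.span R {b i, b j}) :
    IsDiagonalBasis Q L (Function.update (Function.update c i (Q u)) j (Q v))
      (Function.update (Function.update b i u) j v) where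
  polar_eq_zero := by
    have horth {k : ι} (hki : k ≠ i) (hkj : k ≠ j) {w : E} (hw : w ∈ ({u, v} : Set E)) :
        polar Q (b k) w = 0 :=
      polar_eq_zero_of_mem_span_pair (hb.polar_eq_zero hki) (hb.polar_eq_zero hkj)
        (hspan ▸ Submodule.subset_span hw)
    have horth' {k : ι} (hki : k ≠ i) (hkj : k ≠ j) {w : E} (hw : w ∈ ({u, v} : Set E)) :
        polar Q w (b k) = 0 := polar_comm Q _ _ ▸ horth hki hkj hw
    intro k l hkl
    have hkl' := hb.polar_eq_zero hkl
    have hvu : polar Q v u = 0 := polar_comm Q _ _ ▸ huv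
    simp only [Function.update_apply]
    split_ifs <;> simp_all
  map_eq k := by
    simp only [Function.update_apply, apply_ite Q, hb.map_eq]
  ne_zero k := by
    simp only [Function.update_apply]
    split_ifs
    exacts [hv, hu, hb.ne_zero k]
  span_eq := by rw [span_range_update_update b hij hspan, hb.span_eq]

lemma span_pair_eq_of_det_eq_one {α β x y : R} (hdet : α * x ^ 2 + β * y ^ 2 = 1) (u v : E) :
    Submodule.span R {x • u + y • v, -(β * y) • u + (α * x) • v} = Submodule.span R {u, v} := by
  apply le_antisymm <;> rw [Submodule.span_le, Set.pair_subset_iff] <;>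
    simp only [SetLike.mem_coe, Submodule.mem_span_pair]
  · exact ⟨⟨_, _, rfl⟩, ⟨_, _, rfl⟩⟩
  · refine ⟨⟨α * x, -y, ?_⟩, ⟨β * y, x, ?_⟩⟩
    · match_scalars
      · linear_combination hdet
      · ring
    · match_scalars
      · ring
      · linear_combination hdet

lemma HasDiagonalForm.update_pair (h : HasDiagonalForm Q L c) (hij : i ≠ j) {α β x y : R} {c₀ : K}
    (hi : algebraMap R K α * c₀ = c i) (hj : algebraMap R K β * c₀ = c j)
    (hxy : α * x ^ 2 + β * y ^ 2 = 1) :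
    HasDiagonalForm Q L
      (Function.update (Function.update c i c₀) j (algebraMap R K (α * β) * c₀)) := by
  obtain ⟨b, hb⟩ := h
  have hbij : polar Q (b i) (b j) = 0 := hb.polar_eq_zero hij
  have hbji : polar Q (b j) (b i) = 0 := hb.polar_eq_zero hij.symm
  have hxy' :
      algebraMap R K α * algebraMap R K x ^ 2 + algebraMap R K β * algebraMap R K y ^ 2 = 1 := by
    simpa using congr_arg (algebraMap R K) hxy
  have hu : Q (x • b i + y • b j) = c₀ := by
    rw [map_smul_add_smul_of_polar_eq_zero hbij, hb.map_eq, hb.map_eq, ← hi, ← hj]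
    linear_combination c₀ * hxy'
  have hv : Q (-(β * y) • b i + (α * x) • b j) = algebraMap R K (α * β) * c₀ := by
    rw [map_smul_add_smul_of_polar_eq_zero hbij, hb.map_eq, hb.map_eq, ← hi, ← hj]
    simp only [map_neg, map_mul]
    linear_combination algebraMap R K α * algebraMap R K β * c₀ * hxy'
  have huv : polar Q (x • b i + y • b j) (-(β * y) • b i + (α * x) • b j) = 0 := by
    simp only [polar_add_left, polar_add_right, polar_smul_left_of_tower,
      polar_smul_right_of_tower, hbij, hbji, polar_self, hb.map_eq, Algebra.smul_def, ← hi, ← hj,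
      map_neg, map_mul]
    ring
  have hα : algebraMap R K α * c₀ ≠ 0 := hi ▸ hb.ne_zero i
  have hβ : algebraMap R K β * c₀ ≠ 0 := hj ▸ hb.ne_zero j
  have hnew := hb.update_pair hij huv (by rw [hu]; exact right_ne_zero_of_mul hα)
    (by rw [hv, map_mul, mul_assoc]; exact mul_ne_zero (left_ne_zero_of_mul hα) hβ)
    (span_pair_eq_of_det_eq_one hxy _ _)
  rw [hu, hv] at hnew
  exact ⟨_, hnew⟩

end UpdatePair

end Tower

lemma HasDiagonalForm.update_pair_one_neg_one [NeZero (2 : K)] [DecidableEq ι] {M : Submodule K E}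
    (h : HasDiagonalForm Q M c) {i j : ι} (hij : i ≠ j) (hsq : IsSquare (-(c i * c j))) :
    HasDiagonalForm Q M (Function.update (Function.update c i 1) j (-1)) := by
  obtain ⟨s, hs⟩ := hsq
  have hi := h.ne_zero i
  have hj := h.ne_zero j
  have hs0 : s ≠ 0 := by
    rintro rfl
    simp [hi, hj] at hs
  have h2 : (2 : K) ≠ 0 := two_ne_zero
  -- With `z = c j * y / s` the form is `c i * (x + z) * (x - z)`; take `x + z = 2`.
  have hrep : c i * ((1 + (4 * c i)⁻¹) : K) ^ 2
      + c j * (s / c j * (1 - (4 * c i)⁻¹)) ^ 2 = 1 := by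
    have h4 : (4 : K) ≠ 0 := by
      rw [← two_add_two_eq_four, ← two_mul]; exact mul_ne_zero h2 h2
    field_simp
    linear_combination (-1) * (4 * c i - 1) ^ 2 * hs
  have hone := h.update_pair (α := c i) (β := c j) (c₀ := 1) hij (mul_one _) (mul_one _) hrep
  have hneg := hone.update_sq_mul j (Units.mk0 s⁻¹ (inv_ne_zero hs0))
  have hval : (s ^ 2)⁻¹ * (c i * c j) = -1 := by
    field_simp
    linear_combination -hs
  simpa [hval] using hneg

end DiagonalBasis

section ChainLength

variable {p : ℕ} [Fact p.Prime] {E : Type*} [AddCommGroup E] [Module ℤ_[p] E]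
  {A A' C : Submodule ℤ_[p] E}

lemma chainLength_succ {k : ℕ} (hcov : A ⋖ A') (h : chainLength p A' C k) :
    chainLength p A C (k + 1) := by
  obtain ⟨f, hf0, hflast, hf⟩ := h
  refine ⟨Fin.cons A f, rfl, by rw [← Fin.succ_last, Fin.cons_succ, hflast], fun i ↦ ?_⟩
  cases i using Fin.cases with
  | zero => simpa [hf0] using hcov
  | succ i => simpa [← Fin.succ_castSucc] using hf i

lemma chainLength_unique {k l : ℕ} (hk : chainLength p A C k) (hl : chainLength p A C l) :
    k = l := by
  obtain ⟨f, hf0, hflast, hf⟩ := hk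
  obtain ⟨g, hg0, hglast, hg⟩ := hl
  exact (CompositionSeries.jordan_holder (X := Submodule ℤ_[p] E) ⟨k, f, hf⟩ ⟨l, g, hg⟩
    (hf0.trans hg0.symm) (hflast.trans hglast.symm)).length_eq

end ChainLength

lemma norm_polar_le {p : ℕ} [Fact p.Prime] {E : Type*} [AddCommGroup E] [Module ℚ_[p] E]
    {Q : QuadraticForm ℚ_[p] E} {x y : E} {C : ℝ} (hx : ‖Q x‖ ≤ C) (hy : ‖Q y‖ ≤ C)
    (hxy : ‖Q (x + y)‖ ≤ C) : ‖polar Q x y‖ ≤ C := by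
  have norm_sub_le (u v : ℚ_[p]) : ‖u - v‖ ≤ max ‖u‖ ‖v‖ := by
    simpa [sub_eq_add_neg] using Padic.nonarchimedean u (-v)
  calc ‖Q (x + y) - Q x - Q y‖
      ≤ max (max ‖Q (x + y)‖ ‖Q x‖) ‖Q y‖ :=
        (norm_sub_le _ _).trans (max_le_max_right _ (norm_sub_le _ _))
    _ ≤ C := max_le (max_le hxy hx) hy

section PadicDiagonal

variable {p : ℕ} [Fact p.Prime] {E ι : Type*} [AddCommGroup E] [Module ℚ_[p] E] [Module ℤ_[p] E]
  [IsScalarTower ℤ_[p] ℚ_[p] E] {Q : QuadraticForm ℚ_[p] E} {L : Submodule ℤ_[p] E}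
  {c c' : ι → ℚ_[p]}

section DecidableEq

variable [DecidableEq ι]

lemma HasDiagonalForm.update_of_isSquare_div (h : HasDiagonalForm Q L c) (i : ι) {c₀ : ℚ_[p]}
    (hnorm : ‖c₀‖ = ‖c i‖) (hsq : IsSquare (c₀ / c i)) :
    HasDiagonalForm Q L (Function.update c i c₀) := by
  obtain ⟨s, hs⟩ := hsq
  have hi := h.ne_zero i
  have hs1 : ‖s‖ = 1 := by
    rw [← pow_eq_one_iff_of_nonneg (norm_nonneg s) two_ne_zero, pow_two, ← norm_mul, ← hs,
      norm_div, hnorm, div_self (norm_ne_zero_iff.2 hi)]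
  convert h.update_sq_mul i (PadicInt.mkUnits hs1) using 2
  rw [← div_eq_iff hi, hs, pow_two]
  rfl

lemma HasDiagonalForm.update_pair_of_norm_eq (hp : p ≠ 2) (h : HasDiagonalForm Q L c) {i j : ι}
    (hij : i ≠ j) {c₀ : ℚ_[p]} (hi : ‖c i‖ = ‖c₀‖) (hj : ‖c j‖ = ‖c₀‖) :
    HasDiagonalForm Q L (Function.update (Function.update c i c₀) j (c i * c j / c₀)) := by
  have hc₀ : c₀ ≠ 0 := norm_ne_zero_iff.1 (hi ▸ norm_ne_zero_iff.2 (h.ne_zero i))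
  have hunit {a : ℚ_[p]} (ha : ‖a‖ = ‖c₀‖) : ‖a / c₀‖ = 1 := by
    rw [norm_div, ha, div_self (norm_ne_zero_iff.2 hc₀)]
  let α : ℤ_[p] := ⟨c i / c₀, (hunit hi).le⟩
  let β : ℤ_[p] := ⟨c j / c₀, (hunit hj).le⟩
  obtain ⟨x, y, hxy⟩ := exists_mul_sq_add_mul_sq_eq_one_padicInt hp (a := α) (b := β)
    (PadicInt.isUnit_iff.2 (hunit hi)) (PadicInt.isUnit_iff.2 (hunit hj))
  have hα : algebraMap ℤ_[p] ℚ_[p] α = c i / c₀ := rfl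
  have hβ : algebraMap ℤ_[p] ℚ_[p] β = c j / c₀ := rfl
  convert h.update_pair hij (c₀ := c₀) (by rw [hα, div_mul_cancel₀ _ hc₀])
    (by rw [hβ, div_mul_cancel₀ _ hc₀]) hxy using 2
  rw [map_mul, hα, hβ]
  field_simp

lemma HasDiagonalForm.piecewise (hp : p ≠ 2) (h : HasDiagonalForm Q L c) {S : Finset ι} {r : ℝ}
    (hc : ∀ i ∈ S, ‖c i‖ = r) (hc' : ∀ i ∈ S, ‖c' i‖ = r)
    (hsq : IsSquare ((∏ i ∈ S, c' i) / ∏ i ∈ S, c i)) :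
    HasDiagonalForm Q L (S.piecewise c' c) := by
  induction S using Finset.induction_on generalizing c with
  | empty => simpa using h
  | insert a S ha ih =>
    rw [Finset.forall_mem_insert] at hc hc'
    rcases S.eq_empty_or_nonempty with rfl | ⟨l, hl⟩
    · rw [Finset.piecewise_insert, Finset.piecewise_empty]
      exact h.update_of_isSquare_div a (hc'.1.trans hc.1.symm) (by simpa using hsq)
    have hla : l ≠ a := ne_of_mem_of_not_mem hl ha
    have hr : r ≠ 0 := hc.1 ▸ norm_ne_zero_iff.2 (h.ne_zero a)
    have hpair := h.update_pair_of_norm_eq hp hla.symm (hc.1.trans hc'.1.symm)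
      ((hc.2 l hl).trans hc'.1.symm)
    set d := Function.update (Function.update c a (c' a)) l (c a * c l / c' a) with hd
    have hdS : ∀ i ∈ S, ‖d i‖ = r := by
      intro i hi
      rcases eq_or_ne i l with rfl | hil
      · simp [hd, hc.1, hc.2 i hl, hc'.1, hr]
      · simp [hd, hil, ne_of_mem_of_not_mem hi ha, hc.2 i hi]
    have hprod : ∏ i ∈ S, d i = (∏ i ∈ insert a S, c i) / c' a := by
      rw [Finset.prod_insert ha, hd, Finset.prod_update_of_mem hl,
        Finset.prod_update_of_notMem (by simp [ha]), ← Finset.mul_prod_erase S c hl,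
        Finset.sdiff_singleton_eq_erase]
      ring
    convert ih hpair hdS hc'.2 ?_ using 1
    · ext i
      by_cases hi : i ∈ S
      · simp [hi]
      · have hil : i ≠ l := fun h ↦ hi (h ▸ hl)
        rcases eq_or_ne i a with rfl | hia <;> simp [*]
    · rwa [hprod, div_div_eq_mul_div, mul_comm, ← Finset.prod_insert ha]

end DecidableEq

lemma HasDiagonalForm.of_isSquare_prod_div (hp : p ≠ 2) [Finite ι] {L' : Submodule ℤ_[p] E}
    (h : HasDiagonalForm Q L c) (h' : HasDiagonalForm Q L' c')
    (hL : Submodule.span ℚ_[p] (L : Set E) = ⊤) (hL' : Submodule.span ℚ_[p] (L' : Set E) = ⊤)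
    {S : Finset ι} {r s : ℝ} (hc : ∀ i ∈ S, ‖c i‖ = r) (hc' : ∀ i ∈ S, ‖c' i‖ = r)
    (hcs : ∀ i ∉ S, ‖c i‖ = s) (hcs' : ∀ i ∉ S, ‖c' i‖ = s)
    (hsq : IsSquare ((∏ i ∈ S, c' i) / ∏ i ∈ S, c i)) : HasDiagonalForm Q L c' := by
  classical
  have := Fintype.ofFinite ι
  have hcompl : IsSquare ((∏ i ∈ Sᶜ, c' i) / ∏ i ∈ Sᶜ, c i) := by
    have hne {d : ι → ℚ_[p]} (hd : ∀ i, d i ≠ 0) : ∏ i ∈ S, d i ≠ 0 :=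
      Finset.prod_ne_zero_iff.2 fun i _ ↦ hd i
    have htotal := (isSquare_prod_div_prod h h' hL hL').div hsq
    rwa [← Finset.prod_mul_prod_compl S c, ← Finset.prod_mul_prod_compl S c', mul_div_mul_comm,
      mul_div_cancel_left₀ _ (div_ne_zero (hne h'.ne_zero) (hne h.ne_zero))] at htotal
  have hpiecewise {i : ι} (hi : i ∈ Sᶜ) : S.piecewise c' c i = c i :=
    S.piecewise_eq_of_notMem _ _ (Finset.mem_compl.1 hi)
  convert (h.piecewise hp hc hc' hsq).piecewise hp (S := Sᶜ) (r := s) (c' := c')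
    (fun i hi ↦ by rw [hpiecewise hi, hcs i (Finset.mem_compl.1 hi)])
    (fun i hi ↦ hcs' i (Finset.mem_compl.1 hi))
    (by rwa [Finset.prod_congr rfl fun i hi ↦ hpiecewise hi]) using 1
  ext i
  by_cases hi : i ∈ S <;> simp [hi]

section GramSchmidt

lemma exists_forall_norm_le {s : Set ℚ_[p]} (hs : s.Nonempty) (hbdd : ∃ C, ∀ x ∈ s, ‖x‖ ≤ C) :
    ∃ x ∈ s, ∀ y ∈ s, ‖y‖ ≤ ‖x‖ := by
  by_cases h0 : ∀ x ∈ s, x = 0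
  · obtain ⟨x, hx⟩ := hs
    exact ⟨x, hx, fun y hy ↦ by rw [h0 x hx, h0 y hy]⟩
  push Not at h0
  obtain ⟨x₀, hx₀, hx₀0⟩ := h0
  obtain ⟨C, hC⟩ := hbdd
  have hp1 : (1 : ℝ) < p := mod_cast (Fact.out : p.Prime).one_lt
  obtain ⟨m, hm⟩ := pow_unbounded_of_one_lt C hp1
  obtain ⟨_, ⟨x, hx, hx0, rfl⟩, hmin⟩ := Int.exists_least_of_bdd
    (P := fun v ↦ ∃ x ∈ s, x ≠ 0 ∧ x.valuation = v)
    ⟨-m, by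
      rintro _ ⟨x, hx, hx0, rfl⟩
      have h := (hC x hx).trans hm.le
      rw [Padic.norm_eq_zpow_neg_valuation hx0, ← zpow_natCast,
        zpow_le_zpow_iff_right₀ hp1] at h
      lia⟩
    ⟨_, x₀, hx₀, hx₀0, rfl⟩
  refine ⟨x, hx, fun y hy ↦ ?_⟩
  rcases eq_or_ne y 0 with rfl | hy0
  · simp
  · rw [Padic.norm_eq_zpow_neg_valuation hy0, Padic.norm_eq_zpow_neg_valuation hx0,
      zpow_le_zpow_iff_right₀ hp1]
    exact neg_le_neg (hmin _ ⟨y, hy, hy0, rfl⟩)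

lemma exists_polar_sub_smul_eq_zero (hp : p ≠ 2) {x y : E} (hQx : Q x ≠ 0)
    (hxy : ‖polar Q x y‖ ≤ ‖Q x‖) : ∃ a : ℤ_[p], polar Q x (y - a • x) = 0 := by
  have hnorm : ‖polar Q x y / (2 * Q x)‖ ≤ 1 := by
    rw [norm_div, norm_mul, norm_two_padic hp, one_mul]
    exact div_le_one_of_le₀ hxy (norm_nonneg _)
  obtain ⟨a, ha⟩ : ∃ a : ℤ_[p], (a : ℚ_[p]) = polar Q x y / (2 * Q x) := ⟨⟨_, hnorm⟩, rfl⟩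
  refine ⟨a, ?_⟩
  rw [polar_sub_right, polar_smul_right_of_tower, polar_self, Algebra.smul_def, two_nsmul,
    ← two_mul, PadicInt.algebraMap_apply, ha, div_mul_cancel₀ _ (mul_ne_zero two_ne_zero hQx),
    sub_self]

lemma finrank_span_inf_ker_lt [FiniteDimensional ℚ_[p] E] {x : E} (hx : x ∈ L) (hQx : Q x ≠ 0) :
    Module.finrank ℚ_[p] (Submodule.span ℚ_[p]
      (L ⊓ (LinearMap.ker (polarBilin Q x)).restrictScalars ℤ_[p] : Set E)) <
    Module.finrank ℚ_[p] (Submodule.span ℚ_[p] (L : Set E)) := by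
  refine Submodule.finrank_lt_finrank_of_lt (SetLike.lt_iff_le_and_exists.2
    ⟨Submodule.span_mono Set.inter_subset_left, x, Submodule.subset_span hx, fun hmem ↦ hQx ?_⟩)
  have hker := Submodule.span_le.2 (Set.inter_subset_right (s := (L : Set E))) hmem
  simpa using hker

/-- Gram–Schmidt is integral when each step splits off a vector `x` with `‖Q x‖` maximal. -/
lemma exists_hasDiagonalForm (hp : p ≠ 2) [FiniteDimensional ℚ_[p] E]
    (hbdd : ∃ C, ∀ x ∈ L, ‖Q x‖ ≤ C) (hL : ∀ x ∈ L, (∀ y ∈ L, polar Q x y = 0) → x = 0) :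
    ∃ (k : ℕ) (c : Fin k → ℚ_[p]), HasDiagonalForm Q L c := by
  induction hd : Module.finrank ℚ_[p] (Submodule.span ℚ_[p] (L : Set E))
    using Nat.strong_induction_on generalizing L with | _ d ih
  obtain ⟨_, ⟨x, hx, rfl⟩, hmax⟩ := exists_forall_norm_le (s := Q '' L)
    ⟨_, 0, L.zero_mem, rfl⟩ (by simpa [Set.forall_mem_image] using hbdd)
  rw [Set.forall_mem_image] at hmax
  by_cases hQx : Q x = 0
  · have hQ0 (y : E) (hy : y ∈ L) : Q y = 0 := by simpa [hQx] using hmax hy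
    have hbot : L = ⊥ := (Submodule.eq_bot_iff L).2 fun y hy ↦ hL y hy fun z hz ↦ by
      simp [polar, hQ0 _ hy, hQ0 _ hz, hQ0 _ (L.add_mem hy hz)]
    exact ⟨0, finZeroElim, finZeroElim, Subsingleton.pairwise, finZeroElim, finZeroElim, by
      simp [hbot]⟩
  let L' := L ⊓ (LinearMap.ker (polarBilin Q x)).restrictScalars ℤ_[p]
  have hsplit (y : E) (hy : y ∈ L) : ∃ a : ℤ_[p], y - a • x ∈ L' := by
    obtain ⟨a, ha⟩ := exists_polar_sub_smul_eq_zero hp hQx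
      (norm_polar_le le_rfl (hmax hy) (hmax (L.add_mem hx hy)))
    exact ⟨a, L.sub_mem hy (L.smul_mem a hx), ha⟩
  have hL' : ∀ y ∈ L', (∀ z ∈ L', polar Q y z = 0) → y = 0 := by
    refine fun y hy hyz ↦ hL y hy.1 fun z hz ↦ ?_
    obtain ⟨a, ha⟩ := hsplit z hz
    have hyx : polar Q y x = 0 := polar_comm Q x y ▸ hy.2
    simpa [polar_sub_right, polar_smul_right_of_tower, hyx] using hyz _ ha
  obtain ⟨k, c, b, hb⟩ := ih _ (hd ▸ finrank_span_inf_ker_lt hx hQx)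
    (hbdd.imp fun C hC y hy ↦ hC y hy.1) hL' rfl
  have hsup : Submodule.span ℤ_[p] {x} ⊔ L' = L := by
    refine le_antisymm (sup_le ((Submodule.span_singleton_le_iff_mem _ _).2 hx) inf_le_left)
      fun y hy ↦ ?_
    obtain ⟨a, ha⟩ := hsplit y hy
    exact Submodule.mem_sup.2 ⟨a • x, Submodule.mem_span_singleton.2 ⟨a, rfl⟩, _, ha, by abel⟩
  exact ⟨k + 1, _, _, hsup ▸ hb.cons hQx fun y hy ↦ hy.2⟩

lemma exists_hasDiagonalForm_finrank (hp : p ≠ 2) [FiniteDimensional ℚ_[p] E]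
    (hQ : (polarBilin Q).Nondegenerate) (hspan : Submodule.span ℚ_[p] (L : Set E) = ⊤)
    (hbdd : ∃ C, ∀ x ∈ L, ‖Q x‖ ≤ C) :
    ∃ c : Fin (Module.finrank ℚ_[p] E) → ℚ_[p], HasDiagonalForm Q L c := by
  obtain ⟨k, c, h⟩ := exists_hasDiagonalForm hp hbdd fun x _ hxL ↦ hQ.1 x fun y ↦ by
    have hle : Submodule.span ℚ_[p] (L : Set E) ≤ LinearMap.ker (polarBilin Q x) :=
      Submodule.span_le.2 hxL
    exact hle (hspan ▸ Submodule.mem_top)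
  obtain ⟨B, -⟩ := h.exists_basis hspan
  obtain rfl : Module.finrank ℚ_[p] E = k := by
    rw [Module.finrank_eq_card_basis B, Fintype.card_fin]
  exact ⟨c, h⟩

end GramSchmidt

section Polydisc

/-- The `ℤ_p`-module of vectors whose `i`-th coordinate in the basis `B` has norm at most `r i`.
A lattice spanned by an orthogonal basis and its dual lattice are both of this form. -/
noncomputable def polydisc (B : Module.Basis ι ℚ_[p] E) (r : ι → NNReal) : Submodule ℤ_[p] E where
  carrier := {x | ∀ i, ‖B.repr x i‖₊ ≤ r i}
  add_mem' hx hy i := by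
    rw [map_add, Finsupp.add_apply]
    exact (IsUltrametricDist.nnnorm_add_le_max _ _).trans (max_le (hx i) (hy i))
  zero_mem' i := by simp
  smul_mem' a x hx i := by
    rw [← algebraMap_smul ℚ_[p], map_smul, Finsupp.smul_apply, nnnorm_smul]
    exact mul_le_of_le_one_of_le a.norm_le_one (hx i)

variable {B : Module.Basis ι ℚ_[p] E} {r : ι → NNReal}

lemma mem_polydisc {x : E} : x ∈ polydisc B r ↔ ∀ i, ‖B.repr x i‖₊ ≤ r i := Iff.rfl

lemma smul_basis_mem_polydisc {a : ℚ_[p]} {i : ι} : a • B i ∈ polydisc B r ↔ ‖a‖₊ ≤ r i := by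
  classical
  rw [mem_polydisc]
  refine ⟨fun h ↦ by simpa using h i, fun h j ↦ ?_⟩
  rcases eq_or_ne i j with rfl | hij <;> simp [*]

lemma mem_range_algebraMap_iff_norm_le_one {a : ℚ_[p]} :
    a ∈ Set.range (algebraMap ℤ_[p] ℚ_[p]) ↔ ‖a‖ ≤ 1 :=
  ⟨fun ⟨z, hz⟩ ↦ hz ▸ z.norm_le_one, fun h ↦ ⟨⟨a, h⟩, rfl⟩⟩

lemma IsDiagonalBasis.eq_polydisc_one (hB : IsDiagonalBasis Q L c B) : L = polydisc B 1 := by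
  ext x
  rw [← hB.span_eq, B.mem_span_iff_repr_mem ℤ_[p], mem_polydisc]
  exact forall_congr' fun i ↦ mem_range_algebraMap_iff_norm_le_one

lemma mem_dualLattice_iff {x : E} : x ∈ dualLattice p Q L ↔ ∀ y ∈ L, ‖polar Q x y‖ ≤ 1 :=
  forall₂_congr fun _ _ ↦ Submodule.mem_one.trans mem_range_algebraMap_iff_norm_le_one

lemma mem_dualLattice_span_range {b : ι → E} {x : E} :
    x ∈ dualLattice p Q (Submodule.span ℤ_[p] (Set.range b)) ↔ ∀ i, ‖polar Q x (b i)‖ ≤ 1 := by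
  rw [mem_dualLattice_iff]
  refine ⟨fun h i ↦ h _ (Submodule.subset_span ⟨i, rfl⟩), fun h y hy ↦ ?_⟩
  induction hy using Submodule.span_induction with
  | mem y hy => obtain ⟨i, rfl⟩ := hy; exact h i
  | zero => simp
  | add y z _ _ hy hz =>
    rw [polar_add_right]
    exact (Padic.nonarchimedean _ _).trans (max_le hy hz)
  | smul a y _ hy =>
    rw [polar_smul_right_of_tower, Algebra.smul_def, norm_mul]
    exact mul_le_one₀ a.norm_le_one (norm_nonneg _) hy

lemma IsDiagonalBasis.dualLattice_eq_polydisc (hp : p ≠ 2) (hB : IsDiagonalBasis Q L c B) :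
    dualLattice p Q L = polydisc B fun i ↦ ‖c i‖₊⁻¹ := by
  ext x
  rw [← hB.span_eq, mem_dualLattice_span_range, mem_polydisc]
  refine forall_congr' fun i ↦ ?_
  rw [hB.polar_basis, norm_mul, norm_mul, norm_two_padic hp, one_mul,
    ← NNReal.coe_le_coe, NNReal.coe_inv, coe_nnnorm, coe_nnnorm, ← one_div,
    le_div_iff₀' (norm_pos_iff.2 (hB.ne_zero i))]

lemma dualLattice_eq_self_of_norm_eq_one (hp : p ≠ 2) (h : HasDiagonalForm Q L c)
    (hL : Submodule.span ℚ_[p] (L : Set E) = ⊤) (hc : ∀ i, ‖c i‖ = 1) : dualLattice p Q L = L := by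
  obtain ⟨B, hB⟩ := h.exists_basis hL
  have hc' (i : ι) : ‖c i‖₊ = 1 := NNReal.eq (hc i)
  rw [hB.dualLattice_eq_polydisc hp, hB.eq_polydisc_one]
  simp [hc', Pi.one_def]

lemma norm_eq_one_of_inv_prime_lt {a : ℚ_[p]} (hlt : (p : ℝ)⁻¹ < ‖a‖) (hle : ‖a‖ ≤ 1) :
    ‖a‖ = 1 := by
  have h := mt (Padic.norm_le_pow_iff_norm_lt_pow_add_one a (-1)).2
  rw [zpow_neg_one, not_le, neg_add_cancel, zpow_zero, not_lt] at h
  exact hle.antisymm (h hlt)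

lemma polydisc_update_lt [DecidableEq ι] {a : ι} (ha : r a = 1) :
    polydisc B (Function.update r a (p : NNReal)⁻¹) < polydisc B r := by
  have hp1 : (1 : NNReal) < p := mod_cast (Fact.out : p.Prime).one_lt
  have hle : Function.update r a (p : NNReal)⁻¹ ≤ r :=
    update_le_self_iff.2 (ha ▸ inv_le_one_of_one_le₀ hp1.le)
  refine SetLike.lt_iff_le_and_exists.2 ⟨fun x hx i ↦ (hx i).trans (hle i), (1 : ℚ_[p]) • B a, ?_⟩
  rw [smul_basis_mem_polydisc, smul_basis_mem_polydisc, Function.update_self, nnnorm_one, ha]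
  exact ⟨le_rfl, (inv_lt_one_of_one_lt₀ hp1).not_ge⟩

lemma polydisc_update_covBy [DecidableEq ι] {a : ι} (ha : r a = 1) :
    polydisc B (Function.update r a (p : NNReal)⁻¹) ⋖ polydisc B r := by
  refine ⟨polydisc_update_lt ha, fun M hltM hMlt ↦ hMlt.not_ge fun x hx ↦ ?_⟩
  obtain ⟨y, hyM, hy⟩ := SetLike.exists_of_lt hltM
  have hyr : y ∈ polydisc B r := hMlt.le hyM
  have hya : ‖B.repr y a‖ = 1 := by
    refine norm_eq_one_of_inv_prime_lt ?_ (NNReal.coe_le_coe.2 ((hyr a).trans_eq ha))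
    by_contra! hlow
    refine hy fun i ↦ ?_
    rcases eq_or_ne i a with rfl | hia
    · rw [Function.update_self]
      exact_mod_cast hlow
    · rw [Function.update_of_ne hia]
      exact hyr i
  have hya0 : B.repr y a ≠ 0 := norm_ne_zero_iff.1 (hya ▸ one_ne_zero)
  obtain ⟨t, ht⟩ : B.repr x a / B.repr y a ∈ Set.range (algebraMap ℤ_[p] ℚ_[p]) := by
    rw [mem_range_algebraMap_iff_norm_le_one, norm_div, hya, div_one]
    exact NNReal.coe_le_coe.2 ((hx a).trans_eq ha)
  have hsub : x - t • y ∈ polydisc B (Function.update r a (p : NNReal)⁻¹) := by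
    intro i
    rcases eq_or_ne i a with rfl | hia
    · rw [← algebraMap_smul ℚ_[p], ht]
      simp [hya0]
    · rw [Function.update_of_ne hia]
      exact Submodule.sub_mem _ hx (Submodule.smul_mem _ t hyr) i
  exact sub_add_cancel x (t • y) ▸ M.add_mem (hltM.le hsub) (M.smul_mem t hyM)

lemma chainLength_polydisc [DecidableEq ι] (B : Module.Basis ι ℚ_[p] E) (S : Finset ι) :
    chainLength p (polydisc B (S.piecewise (fun _ ↦ (p : NNReal)⁻¹) 1)) (polydisc B 1) S.card := by
  induction S using Finset.induction_on with
  | empty => exact ⟨fun _ ↦ polydisc B 1, by simp, rfl, finZeroElim⟩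
  | insert a S ha ih =>
    rw [Finset.piecewise_insert, Finset.card_insert_of_notMem ha]
    exact chainLength_succ (polydisc_update_covBy (by simp [ha])) ih

end Polydisc

section VertexLattice

lemma norm_eq_one_or_norm_eq_prime {a : ℚ_[p]} (h1 : 1 ≤ ‖a‖) (hp : ‖a‖ ≤ p) :
    ‖a‖ = 1 ∨ ‖a‖ = p := by
  have h := Padic.norm_le_pow_iff_norm_lt_pow_add_one a 0
  rw [zpow_zero, zero_add, zpow_one] at h
  exact hp.eq_or_lt.symm.imp_left fun hlt ↦ (h.2 hlt).antisymm h1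

variable {B : Module.Basis ι ℚ_[p] E}

lemma IsDiagonalBasis.one_le_norm_of_dualLattice_le (hp : p ≠ 2) (hB : IsDiagonalBasis Q L c B)
    (hle : dualLattice p Q L ≤ L) (i : ι) : 1 ≤ ‖c i‖ := by
  rw [hB.dualLattice_eq_polydisc hp, hB.eq_polydisc_one] at hle
  have hmem : (c i)⁻¹ • B i ∈ polydisc B fun i ↦ ‖c i‖₊⁻¹ :=
    smul_basis_mem_polydisc.2 (nnnorm_inv _).le
  have hinv := smul_basis_mem_polydisc.1 (hle hmem)
  rw [nnnorm_inv, Pi.one_apply] at hinv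
  exact (inv_le_one₀ (nnnorm_pos.2 (hB.ne_zero i))).1 hinv

lemma IsDiagonalBasis.norm_le_prime_of_smul_mem_dualLattice (hp : p ≠ 2)
    (hB : IsDiagonalBasis Q L c B) (hpL : ∀ x ∈ L, (p : ℤ_[p]) • x ∈ dualLattice p Q L) (i : ι) :
    ‖c i‖ ≤ p := by
  have hmem := hpL (B i) (hB.span_eq ▸ Submodule.subset_span ⟨i, rfl⟩)
  rw [← algebraMap_smul ℚ_[p], map_natCast, hB.dualLattice_eq_polydisc hp,
    smul_basis_mem_polydisc, ← NNReal.coe_le_coe, coe_nnnorm, Padic.norm_p, NNReal.coe_inv,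
    coe_nnnorm] at hmem
  exact (inv_le_inv₀ (mod_cast (Fact.out : p.Prime).pos) (norm_pos_iff.2 (hB.ne_zero i))).1 hmem

lemma IsDiagonalBasis.exists_card_eq_of_chainLength [Finite ι] [DecidableEq ι] (hp : p ≠ 2)
    (hB : IsDiagonalBasis Q L c B) (hpL : ∀ x ∈ L, (p : ℤ_[p]) • x ∈ dualLattice p Q L)
    (hle : dualLattice p Q L ≤ L) {k : ℕ} (hk : chainLength p (dualLattice p Q L) L k) :
    ∃ S : Finset ι, S.card = k ∧ ∀ i, ‖c i‖ = if i ∈ S then (p : ℝ) else 1 := by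
  obtain ⟨S, hS⟩ : ∃ S : Finset ι, ∀ i, i ∈ S ↔ ‖c i‖ = p :=
    ⟨(Set.toFinite {i | ‖c i‖ = p}).toFinset, fun i ↦ by simp⟩
  have hnorm (i : ι) : ‖c i‖ = if i ∈ S then (p : ℝ) else 1 := by
    split_ifs with hi
    · exact (hS i).1 hi
    · exact (norm_eq_one_or_norm_eq_prime (hB.one_le_norm_of_dualLattice_le hp hle i)
        (hB.norm_le_prime_of_smul_mem_dualLattice hp hpL i)).resolve_right (mt (hS i).2 hi)
  have hdual : dualLattice p Q L = polydisc B (S.piecewise (fun _ ↦ (p : NNReal)⁻¹) 1) := by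
    rw [hB.dualLattice_eq_polydisc hp]
    congr! 1
    ext i
    rw [NNReal.coe_inv, coe_nnnorm, hnorm]
    by_cases hi : i ∈ S <;> simp [hi]
  refine ⟨S, chainLength_unique ?_ hk, hnorm⟩
  rw [hdual, hB.eq_polydisc_one]
  exact chainLength_polydisc B S

lemma norm_le_prime_of_smul_mem_dualLattice (hp : p ≠ 2)
    (hpL : ∀ x ∈ L, (p : ℤ_[p]) • x ∈ dualLattice p Q L) {x : E} (hx : x ∈ L) : ‖Q x‖ ≤ p := by
  have h := mem_dualLattice_iff.1 (hpL x hx) x hx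
  rw [polar_smul_left_of_tower, polar_self, two_nsmul, ← two_mul, Algebra.smul_def, map_natCast,
    norm_mul, norm_mul, norm_two_padic hp, one_mul, Padic.norm_p] at h
  exact (inv_mul_le_one₀ (mod_cast (Fact.out : p.Prime).pos)).1 h

lemma finiteDimensional_of_isLattice (hL : IsLattice p L) : FiniteDimensional ℚ_[p] E := by
  obtain ⟨⟨s, rfl⟩, hspan⟩ := hL
  rw [Submodule.span_span_of_tower] at hspan
  exact ⟨s, hspan⟩

lemma exists_hasDiagonalForm_of_isTypeTwoVertexLattice (hp : p ≠ 2)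
    (hQ : (polarBilin Q).Nondegenerate) (hL : IsTypeTwoVertexLattice p Q L) :
    ∃ c : Fin (Module.finrank ℚ_[p] E) → ℚ_[p], HasDiagonalForm Q L c ∧
      ∃ S : Finset (Fin (Module.finrank ℚ_[p] E)), S.card = 2 ∧
        ∀ i, ‖c i‖ = if i ∈ S then (p : ℝ) else 1 := by
  obtain ⟨hlat, hpL, hle, hchain⟩ := hL
  have := finiteDimensional_of_isLattice hlat
  obtain ⟨c, h⟩ := exists_hasDiagonalForm_finrank hp hQ hlat.2
    ⟨p, fun x hx ↦ norm_le_prime_of_smul_mem_dualLattice hp hpL hx⟩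
  obtain ⟨B, hB⟩ := h.exists_basis hlat.2
  exact ⟨c, h, hB.exists_card_eq_of_chainLength hp hpL hle hchain⟩

lemma exists_perm_forall_mem_iff [Finite ι] {S T : Finset ι} (h : S.card = T.card) :
    ∃ e : Equiv.Perm ι, ∀ i, e i ∈ T ↔ i ∈ S := by
  classical
  have := Fintype.ofFinite ι
  let e := Finset.equivOfCardEq h
  exact ⟨e.extendSubtype, fun i ↦ ⟨not_imp_not.1 (e.extendSubtype_not_mem i),
    e.extendSubtype_mem i⟩⟩

lemma not_isSquare_neg_prod [Finite ι] (hp : p ≠ 2)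
    (hnosd : ¬ ∃ L : Submodule ℤ_[p] E, IsLattice p L ∧ dualLattice p Q L = L)
    (hL : Submodule.span ℚ_[p] (L : Set E) = ⊤) (h : HasDiagonalForm Q L c) {S : Finset ι}
    (hS : S.card = 2) (hc : ∀ i ∉ S, ‖c i‖ = 1) : ¬ IsSquare (-∏ i ∈ S, c i) := by
  classical
  intro hsq
  obtain ⟨i, j, hij, rfl⟩ := Finset.card_eq_two.1 hS
  rw [Finset.prod_pair hij] at hsq
  obtain ⟨L', hfg, hspan, hL'⟩ :=
    (h.span.update_pair_one_neg_one hij hsq).exists_fg_submodule (R := ℤ_[p])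
  rw [hL] at hspan
  refine hnosd ⟨L', ⟨hfg, hspan⟩, dualLattice_eq_self_of_norm_eq_one hp hL' hspan fun k ↦ ?_⟩
  rcases eq_or_ne k j with rfl | hkj
  · simp
  rcases eq_or_ne k i with rfl | hki
  · simp [hij]
  · simpa [hkj, hki] using hc k (by simp [hki, hkj])

lemma isSquare_prod_div_prod_of_norm_eq [Finite ι] [DecidableEq ι] (hp : p ≠ 2)
    (hnosd : ¬ ∃ L : Submodule ℤ_[p] E, IsLattice p L ∧ dualLattice p Q L = L)
    {L' : Submodule ℤ_[p] E} (h : HasDiagonalForm Q L c) (h' : HasDiagonalForm Q L' c')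
    (hL : Submodule.span ℚ_[p] (L : Set E) = ⊤) (hL' : Submodule.span ℚ_[p] (L' : Set E) = ⊤)
    {S : Finset ι} (hS : S.card = 2) (hc : ∀ i, ‖c i‖ = if i ∈ S then (p : ℝ) else 1)
    (hc' : ∀ i, ‖c' i‖ = if i ∈ S then (p : ℝ) else 1) :
    IsSquare ((∏ i ∈ S, c' i) / ∏ i ∈ S, c i) := by
  have norm_neg_prod {d : ι → ℚ_[p]} (hd : ∀ i, ‖d i‖ = if i ∈ S then (p : ℝ) else 1) :
      ‖-∏ i ∈ S, d i‖ = ‖(p : ℚ_[p])⁻¹‖ ^ 2 := by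
    rw [norm_neg, norm_prod, Finset.prod_congr rfl fun i hi ↦ (hd i).trans (if_pos hi),
      Finset.prod_const, hS, norm_inv, Padic.norm_p, inv_inv]
  rw [← neg_div_neg_eq]
  exact isSquare_div_of_not_isSquare_of_norm_eq_sq hp
    (inv_ne_zero (mod_cast (Fact.out : p.Prime).ne_zero)) (norm_neg_prod hc') (norm_neg_prod hc)
    (not_isSquare_neg_prod hp hnosd hL' h' hS fun i hi ↦ (hc' i).trans (if_neg hi))
    (not_isSquare_neg_prod hp hnosd hL h hS fun i hi ↦ (hc i).trans (if_neg hi))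

end VertexLattice

end PadicDiagonal

theorem statement_3_general (hp : p ≠ 2) (Q : QuadraticForm ℚ_[p] V)
    (hQ : LinearMap.BilinForm.Nondegenerate (QuadraticMap.polarBilin Q))
    (hnosd : ¬ ∃ L : Submodule ℤ_[p] V, IsLattice p L ∧ dualLattice p Q L = L)
    (Λ₁ Λ₂ : Submodule ℤ_[p] V)
    (hΛ₁ : IsTypeTwoVertexLattice p Q Λ₁) (hΛ₂ : IsTypeTwoVertexLattice p Q Λ₂) :
    ∃ g : V ≃ₗ[ℚ_[p]] V, (∀ x, Q (g x) = Q x) ∧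
      LinearMap.det (g : V →ₗ[ℚ_[p]] V) = 1 ∧
      ⇑g '' (Λ₁ : Set V) = (Λ₂ : Set V) := by
  obtain ⟨c₁, h₁, S, hS, hc₁⟩ := exists_hasDiagonalForm_of_isTypeTwoVertexLattice hp hQ hΛ₁
  obtain ⟨c₂, h₂, T, hT, hc₂⟩ := exists_hasDiagonalForm_of_isTypeTwoVertexLattice hp hQ hΛ₂
  obtain ⟨e, he⟩ := exists_perm_forall_mem_iff (hS.trans hT.symm)
  have hc₂' (i) : ‖(c₂ ∘ e) i‖ = if i ∈ S then (p : ℝ) else 1 := by simp [hc₂, he]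
  have hdisc := isSquare_prod_div_prod_of_norm_eq hp hnosd h₁ (h₂.reindex e) hΛ₁.1.2 hΛ₂.1.2
    hS hc₁ hc₂'
  have h₁' : HasDiagonalForm Q Λ₁ (c₂ ∘ e) := h₁.of_isSquare_prod_div hp (h₂.reindex e)
    hΛ₁.1.2 hΛ₂.1.2 (fun i hi ↦ (hc₁ i).trans (if_pos hi)) (fun i hi ↦ (hc₂' i).trans (if_pos hi))
    (fun i hi ↦ (hc₁ i).trans (if_neg hi)) (fun i hi ↦ (hc₂' i).trans (if_neg hi)) hdisc
  obtain ⟨i, -⟩ : S.Nonempty := Finset.card_pos.1 (hS ▸ two_pos)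
  have : Nonempty (Fin (Module.finrank ℚ_[p] V)) := ⟨i⟩
  exact exists_isometry_of_hasDiagonalForm h₁' (h₂.reindex e) hΛ₁.1.2 hΛ₂.1.2

theorem statement_3 (hp : p ≠ 2)
    (Q : QuadraticForm ℚ_[p] V)
    (hQ : LinearMap.BilinForm.Nondegenerate (QuadraticMap.polarBilin Q))
    (hn : 3 ≤ Module.finrank ℚ_[p] V)
    (hnosd : ¬ ∃ L : Submodule ℤ_[p] V, IsLattice p L ∧ dualLattice p Q L = L)
    (Λ₁ Λ₂ : Submodule ℤ_[p] V)
    (hΛ₁ : IsTypeTwoVertexLattice p Q Λ₁) (hΛ₂ : IsTypeTwoVertexLattice p Q Λ₂) :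
    ∃ g : V ≃ₗ[ℚ_[p]] V, (∀ x, Q (g x) = Q x) ∧
      LinearMap.det (g : V →ₗ[ℚ_[p]] V) = 1 ∧
      ⇑g '' (Λ₁ : Set V) = (Λ₂ : Set V) :=
  statement_3_general p hp Q hQ hnosd Λ₁ Λ₂ hΛ₁ hΛ₂
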